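/- (Lemma 3.3, made precise.) Fix I ∈ ℝᵈ, φ ∈ 𝕋ᵈ and t ∈ 𝕋. Assume that the map τ ↦ 𝓜̃(τ, I, φ, t) is differentiable on ℝⁿ, that each map ς ↦ 𝓜̃ᵢ(ς, I, φ, t) is differentiable, and that for every i ∈ {1,…,n} the continuous function (θ, u) ↦ 𝓜̃ᵢ(0, I, θ, u) on 𝕋ᵈ × 𝕋 is not constant on the closure of the orbit { (φ − ςω(I), t − ς) : ς ∈ ℝ } ⊆ 𝕋ᵈ × 𝕋. Then the Melnikov potential has a critical point with respect to τ: there exists τ* ∈ ℝⁿ with ∇_τ 𝓜̃(τ*, I, φ, t) = 0; in fact there exist infinitely many such critical points. -/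

import Mathlib

/-!
Write `g i ς` for the `i`-th partial Melnikov potential at `(ς, I, φ, t)`. Two facts drive the proof.

* Splitting (`melnikovPotential_sub_sum_le`): if the times `τ i` are at mutual distance at least `L`,
  at most one pendulum is away from its equilibrium at any moment, so the Melnikov potential differs
  from `∑ i, g i (τ i)` by `O(exp (-(lam / 4) * L))`.
* Recurrence (`partialMelnikov_eq_zero_shift`, `orbit_recurrent`): `g i ς` equals the continuous
  function `F i` evaluated at the point `(φ - ς ω(I), t - ς)` of an orbit of a linear flow on the torus,
  and such orbits are recurrent. As `F i` is not constant on the orbit closure, `g i` is not constant.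

Hence, arbitrarily far to the right, there are intervals `[a i, b i]` with an intermediate point `m i`
where `g i` exceeds both endpoint values by a margin independent of the location. Placing such
intervals far apart, the splitting shows that the maximum of the Melnikov potential over the box
`∏ i, [a i, b i]` is attained in the interior, which gives a critical point
(`exists_far_critical_point`). The box can be moved to infinity, so the critical points are infinitely
many.
-/

open MeasureTheory

/-- The Melnikov potential. -/
noncomputable def melnikovPotential {n d : ℕ}
    (p0 : Fin n → ℝ → ℝ) (q0 : Fin n → ℝ → AddCircle (1:ℝ))
    (h : (Fin n → ℝ) → (Fin n → AddCircle (1:ℝ)) → (Fin d → ℝ) →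
      (Fin d → AddCircle (1:ℝ)) → ℝ → ℝ)
    (ω : (Fin d → ℝ) → Fin d → ℝ)
    (τ : Fin n → ℝ) (I : Fin d → ℝ) (φ : Fin d → AddCircle (1:ℝ)) (t : ℝ) : ℝ :=
  -∫ σ : ℝ,
    (h (fun i => p0 i (τ i + σ)) (fun i => q0 i (τ i + σ)) I
        (fun j => φ j + ((σ * ω I j : ℝ) : AddCircle (1:ℝ))) (t + σ)
      - h 0 0 I (fun j => φ j + ((σ * ω I j : ℝ) : AddCircle (1:ℝ))) (t + σ))

/-- The `i`-th partial Melnikov potential. -/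
noncomputable def partialMelnikov {n d : ℕ} (i : Fin n)
    (p0 : Fin n → ℝ → ℝ) (q0 : Fin n → ℝ → AddCircle (1:ℝ))
    (h : (Fin n → ℝ) → (Fin n → AddCircle (1:ℝ)) → (Fin d → ℝ) →
      (Fin d → AddCircle (1:ℝ)) → ℝ → ℝ)
    (ω : (Fin d → ℝ) → Fin d → ℝ)
    (ς : ℝ) (I : Fin d → ℝ) (φ : Fin d → AddCircle (1:ℝ)) (t : ℝ) : ℝ :=
  -∫ σ : ℝ,
    (h (Pi.single i (p0 i (ς + σ))) (Pi.single i (q0 i (ς + σ))) I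
        (fun j => φ j + ((σ * ω I j : ℝ) : AddCircle (1:ℝ))) (t + σ)
      - h 0 0 I (fun j => φ j + ((σ * ω I j : ℝ) : AddCircle (1:ℝ))) (t + σ))

/-- If triples satisfying `P i` exist arbitrarily far to the right for every `i`, they can be chosen
one for each `i`, in the order of `Fin n`, with gaps of length at least `L` between the intervals. -/
theorem exists_separated_triples {n : ℕ} (P : Fin n → ℝ → ℝ → ℝ → Prop)
    (hP : ∀ i R, ∃ a m b, R ≤ a ∧ a ≤ m ∧ m ≤ b ∧ P i a m b) (R L : ℝ) (hL : 0 ≤ L) :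
    ∃ a m b : Fin n → ℝ,
      (∀ i, R ≤ a i ∧ a i ≤ m i ∧ m i ≤ b i ∧ P i (a i) (m i) (b i)) ∧
      ∀ i j, i < j → b i + L ≤ a j := by
  induction n generalizing R with
  | zero => exact ⟨0, 0, 0, fun i => i.elim0, fun i => i.elim0⟩
  | succ n ih =>
    obtain ⟨a₀, m₀, b₀, h₁, h₂, h₃, h₄⟩ := hP 0 R
    obtain ⟨a, m, b, hab, hsep⟩ := ih (fun i => P i.succ) (fun i R => hP i.succ R) (b₀ + L)
    refine ⟨Fin.cons a₀ a, Fin.cons m₀ m, Fin.cons b₀ b, ?_, ?_⟩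
    · intro i
      refine Fin.cases ?_ (fun i => ?_) i
      · exact ⟨h₁, h₂, h₃, h₄⟩
      · obtain ⟨k₁, k₂, k₃, k₄⟩ := hab i
        exact ⟨by simp only [Fin.cons_succ]; linarith, k₂, k₃, k₄⟩
    · intro i j
      refine Fin.cases ?_ (fun j => ?_) j
      · intro hij; exact absurd hij (Fin.not_lt_zero i)
      · refine Fin.cases ?_ (fun i => ?_) i
        · intro _; exact (hab j).1
        · intro hij; exact hsep i j (Fin.succ_lt_succ_iff.mp hij)

/-- Variational core. A differentiable `M` that is asymptotic to the separated sum `∑ i, g i (τ i)`,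
with every `g i` recurrent and nonconstant, has critical points with all coordinates beyond any
given `R`: they are interior maxima over boxes whose sides lie far from each other. -/
theorem exists_far_critical_point {n : ℕ} (hn : 1 ≤ n) (M : (Fin n → ℝ) → ℝ)
    (hM : Differentiable ℝ M) (g : Fin n → ℝ → ℝ)
    (hrec : ∀ i x ε R, 0 < ε → ∃ s, R ≤ s ∧ |g i s - g i x| < ε)
    (hnc : ∀ i, ∃ x y, g i x < g i y)
    (happ : ∀ ε, 0 < ε → ∃ L, ∀ τ : Fin n → ℝ, (∀ i j, i ≠ j → L ≤ |τ i - τ j|) →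
      |M τ - ∑ i, g i (τ i)| ≤ ε) (R : ℝ) :
    ∃ τ, (∀ i, R ≤ τ i) ∧ fderiv ℝ M τ = 0 := by
  have : Nonempty (Fin n) := ⟨⟨0, hn⟩⟩
  choose x y hxy using hnc
  -- Five equal parts: recurrence costs `δ` at each end of the oscillation, so `3 * δ` remains,
  -- which exceeds the error `2 * δ` made when two values of `M` are compared through the sum.
  obtain ⟨i₀, hi₀⟩ := Finite.exists_min (fun i => g i (y i) - g i (x i))
  obtain ⟨δ, hδ⟩ : ∃ δ, δ = (g i₀ (y i₀) - g i₀ (x i₀)) / 5 := ⟨_, rfl⟩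
  have hδ0 : 0 < δ := by have := hxy i₀; linarith
  have htriple : ∀ i R, ∃ a m b, R ≤ a ∧ a ≤ m ∧ m ≤ b ∧
      (g i a + 3 * δ < g i m ∧ g i b + 3 * δ < g i m) := by
    intro i R
    obtain ⟨a, ha, ha'⟩ := hrec i (x i) δ R hδ0
    obtain ⟨m, hm, hm'⟩ := hrec i (y i) δ a hδ0
    obtain ⟨b, hb, hb'⟩ := hrec i (x i) δ m hδ0
    have := hi₀ i
    rw [abs_lt] at ha' hm' hb'
    refine ⟨a, m, b, ha, hm, hb, ?_, ?_⟩ <;> linarith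
  obtain ⟨L, hL⟩ := happ δ hδ0
  obtain ⟨a, m, b, hab, hsep⟩ := exists_separated_triples _ htriple R (max L 0) (le_max_right _ _)
  have happ' : ∀ τ ∈ Set.Icc a b, |M τ - ∑ i, g i (τ i)| ≤ δ := by
    intro τ hτ
    have key : ∀ i j, i < j → L ≤ τ j - τ i := by
      intro i j hij
      have := hsep i j hij
      have := hτ.1 j
      have := hτ.2 i
      have := le_max_left L 0
      linarith
    refine hL τ fun i j hij => ?_
    rcases lt_or_gt_of_ne hij with h | h
    · rw [abs_sub_comm]; exact (key i j h).trans (le_abs_self _)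
    · exact (key j i h).trans (le_abs_self _)
  have hm : m ∈ Set.Icc a b := ⟨fun i => (hab i).2.1, fun i => (hab i).2.2.1⟩
  obtain ⟨τ, hτ, hmax⟩ := isCompact_Icc.exists_isMaxOn ⟨m, hm⟩ hM.continuous.continuousOn
  -- Moving the `i`-th coordinate of a maximizer to `m i` cannot gain more than `2 * δ`, whereas from
  -- an endpoint `a i` or `b i` it would gain more than `3 * δ`; so the maximizer is interior.
  have hbdry : ∀ i, ¬ g i (τ i) + 3 * δ < g i (m i) := by
    intro i hi
    have hmem : Function.update τ i (m i) ∈ Set.Icc a b := by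
      constructor
      · intro j
        by_cases hj : j = i
        · subst hj; simpa using hm.1 j
        · simpa [hj] using hτ.1 j
      · intro j
        by_cases hj : j = i
        · subst hj; simpa using hm.2 j
        · simpa [hj] using hτ.2 j
    have h₁ := abs_le.mp (happ' _ hmem)
    have h₂ := abs_le.mp (happ' _ hτ)
    have h₃ : M (Function.update τ i (m i)) ≤ M τ := hmax hmem
    have h₄ : ∑ j, g j (Function.update τ i (m i) j)
        = ∑ j, g j (τ j) + (g i (m i) - g i (τ i)) := by
      rw [← sub_eq_iff_eq_add', ← Finset.sum_sub_distrib, Finset.sum_eq_single i]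
      · simp
      · intro j _ hj; simp [hj]
      · simp
    linarith [h₁.1, h₂.2]
  refine ⟨τ, fun i => (hab i).1.trans (hτ.1 i), ?_⟩
  have hnhds : Set.Icc a b ∈ nhds τ := by
    rw [← Set.pi_univ_Icc]
    refine set_pi_mem_nhds Set.finite_univ fun i _ => Icc_mem_nhds ?_ ?_
    · refine lt_of_le_of_ne (hτ.1 i) fun h => hbdry i ?_
      rw [← h]; exact (hab i).2.2.2.1
    · refine lt_of_le_of_ne (hτ.2 i) fun h => hbdry i ?_
      rw [h]; exact (hab i).2.2.2.2
  exact (hmax.isLocalMax hnhds).fderiv_eq_zero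

theorem integrable_exp_neg_mul_abs {c : ℝ} (hc : 0 < c) :
    Integrable fun x : ℝ => Real.exp (-c * |x|) := by
  rw [← integrableOn_univ, ← Set.Iic_union_Ioi (a := (0 : ℝ))]
  refine IntegrableOn.union ?_ ?_
  · refine (integrableOn_exp_mul_Iic hc 0).congr_fun (fun x hx => ?_) measurableSet_Iic
    simp [abs_of_nonpos (Set.mem_Iic.mp hx)]
  · refine (exp_neg_integrableOn_Ioi 0 hc).congr_fun (fun x hx => ?_) measurableSet_Ioi
    simp [abs_of_pos (Set.mem_Ioi.mp hx)]

/-- A quantity bounded by the sum of exponentials over all indices but `k`, for every choice of `k`,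
is exponentially small in the separation `L` of the centres. Omitting the largest term leaves
indices `j` with `L ≤ 2 * |u j|`, and half of such an exponent already pays for `exp (-(c / 4) * L)`. -/
theorem abs_le_of_forall_erase_le {n : ℕ} {c L D : ℝ} (hc : 0 < c) (hn : 1 ≤ n) (hD : 0 ≤ D)
    (u : Fin n → ℝ) (hu : ∀ i j, i ≠ j → L ≤ |u i - u j|) (E : ℝ)
    (hE : ∀ k, |E| ≤ D * ∑ j ∈ Finset.univ.erase k, Real.exp (-c * |u j|)) :
    |E| ≤ D * Real.exp (-(c / 4) * L) * ∑ j, Real.exp (-(c / 4) * |u j|) := by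
  have : Nonempty (Fin n) := ⟨⟨0, hn⟩⟩
  obtain ⟨k, hk⟩ := Finite.exists_min (fun i => |u i|)
  refine (hE k).trans ?_
  rw [mul_assoc]
  refine mul_le_mul_of_nonneg_left ?_ hD
  rw [Finset.mul_sum]
  refine (Finset.sum_le_sum fun j hj => ?_).trans
    (Finset.sum_le_sum_of_subset_of_nonneg (Finset.erase_subset k _) fun _ _ _ => by positivity)
  rw [← Real.exp_add, Real.exp_le_exp]
  have h₁ := hu j k (Finset.ne_of_mem_erase hj)
  have h₂ := abs_sub (u j) (u k)
  have h₃ := hk j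
  have h₄ : L ≤ 2 * |u j| := by linarith
  nlinarith [abs_nonneg (u j)]

section

variable {n d : ℕ} {lam C0 K : ℝ} {p0 : Fin n → ℝ → ℝ} {q0 : Fin n → ℝ → AddCircle (1:ℝ)}
    {h : (Fin n → ℝ) → (Fin n → AddCircle (1:ℝ)) → (Fin d → ℝ) →
      (Fin d → AddCircle (1:ℝ)) → ℝ → ℝ}

/-- The translation `σ ↦ σ + ς` of the integration variable turns the dependence on `ς` into motion
along the linear flow on `𝕋ᵈ × 𝕋`. -/
theorem partialMelnikov_eq_zero_shift (i : Fin n) (ω : (Fin d → ℝ) → Fin d → ℝ)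
    (ς : ℝ) (I : Fin d → ℝ) (φ : Fin d → AddCircle (1:ℝ)) (t : ℝ) :
    partialMelnikov i p0 q0 h ω ς I φ t =
      partialMelnikov i p0 q0 h ω 0 I
        (fun j => φ j - ((ς * ω I j : ℝ) : AddCircle (1:ℝ))) (t - ς) := by
  unfold partialMelnikov
  rw [← integral_add_right_eq_self (fun σ => h (Pi.single i (p0 i (0 + σ))) _ _ _ _ - _) ς]
  congr 1
  refine integral_congr_ae (Filter.Eventually.of_forall fun σ => ?_)
  have h₁ : ∀ j, φ j - ((ς * ω I j : ℝ) : AddCircle (1:ℝ)) + (((σ + ς) * ω I j : ℝ) : AddCircle (1:ℝ))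
      = φ j + ((σ * ω I j : ℝ) : AddCircle (1:ℝ)) := by
    intro j; rw [add_mul, AddCircle.coe_add]; abel
  have h₂ : t - ς + (σ + ς) = t + σ := by ring
  have h₃ : 0 + (σ + ς) = ς + σ := by ring
  simp only [h₁, h₂, h₃]

/-- A continuous function along an orbit of the linear flow comes back arbitrarily close to each of
its values at arbitrarily late times, because the multiples of an element of a compact group
accumulate at `0`. -/
theorem orbit_recurrent (w : Fin d → ℝ) (φ : Fin d → AddCircle (1:ℝ)) (t : ℝ)
    (F : (Fin d → AddCircle (1:ℝ)) × AddCircle (1:ℝ) → ℝ) (hF : Continuous F)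
    (x ε R : ℝ) (hε : 0 < ε) :
    ∃ s, R ≤ s ∧ |F ((fun j => φ j - ((s * w j : ℝ) : AddCircle (1:ℝ))),
          ((t - s : ℝ) : AddCircle (1:ℝ)))
        - F ((fun j => φ j - ((x * w j : ℝ) : AddCircle (1:ℝ))),
          ((t - x : ℝ) : AddCircle (1:ℝ)))| < ε := by
  have : Fact ((0:ℝ) < 1) := ⟨one_pos⟩
  set y : (Fin d → AddCircle (1:ℝ)) × AddCircle (1:ℝ) :=
    ((fun j => φ j - ((x * w j : ℝ) : AddCircle (1:ℝ))), ((t - x : ℝ) : AddCircle (1:ℝ))) with hy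
  set z : (Fin d → AddCircle (1:ℝ)) × AddCircle (1:ℝ) :=
    ((fun j => ((-w j : ℝ) : AddCircle (1:ℝ))), ((-1 : ℝ) : AddCircle (1:ℝ))) with hz
  have hclus := mapClusterPt_zero_atTop_nsmul z
  have hnear : ∀ᶠ v in nhds (0 : (Fin d → AddCircle (1:ℝ)) × AddCircle (1:ℝ)),
      |F (y + v) - F y| < ε := by
    have hc : Continuous fun v => |F (y + v) - F y| := by fun_prop
    exact hc.continuousAt.eventually_lt_const (by simpa using hε)
  obtain ⟨N, hN, hN'⟩ := ((mapClusterPt_iff_frequently.mp hclus _ hnear).and_eventually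
    (Filter.eventually_ge_atTop ⌈R - x⌉₊)).exists
  refine ⟨x + N, ?_, ?_⟩
  · have := (Nat.le_ceil (R - x)).trans (Nat.cast_le.mpr hN')
    linarith
  · have hpt : ((fun j => φ j - (((x + N) * w j : ℝ) : AddCircle (1:ℝ))),
        ((t - (x + N) : ℝ) : AddCircle (1:ℝ))) = y + N • z := by
      rw [hy, hz]
      ext j
      · have : φ j - (((x + N) * w j : ℝ) : AddCircle (1:ℝ))
            = φ j - ((x * w j : ℝ) : AddCircle (1:ℝ)) + N • ((-w j : ℝ) : AddCircle (1:ℝ)) := by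
          rw [add_mul, AddCircle.coe_add, ← AddCircle.coe_nsmul, nsmul_eq_mul, mul_neg,
            AddCircle.coe_neg]
          abel
        simpa using this
      · have : ((t - (x + N) : ℝ) : AddCircle (1:ℝ))
            = ((t - x : ℝ) : AddCircle (1:ℝ)) + N • ((-1 : ℝ) : AddCircle (1:ℝ)) := by
          rw [← AddCircle.coe_nsmul, nsmul_eq_mul, ← AddCircle.coe_add]
          congr 1; ring
        simpa using this
    rw [hpt]
    exact hN

/-- Integrability of the Melnikov integrand along curves `P`, `Q` decaying like the homoclinic orbits
shifted by `τ`; it covers both the full and the partial potentials. -/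
theorem integrable_sub_zero_section (hlam : 0 < lam)
    (hcont : Continuous fun x : (Fin n → ℝ) × (Fin n → AddCircle (1:ℝ)) × (Fin d → ℝ) ×
        (Fin d → AddCircle (1:ℝ)) × ℝ => h x.1 x.2.1 x.2.2.1 x.2.2.2.1 x.2.2.2.2)
    (hLip : ∀ p q p' q' I φ t, |h p q I φ t - h p' q' I φ t| ≤
      K * ((∑ i, |p i - p' i|) + ∑ i, dist (q i) (q' i)))
    (hK : 0 < K) (w : Fin d → ℝ) (τ : Fin n → ℝ) (I : Fin d → ℝ)
    (φ : Fin d → AddCircle (1:ℝ)) (t : ℝ)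
    (P : ℝ → Fin n → ℝ) (Q : ℝ → Fin n → AddCircle (1:ℝ))
    (hP : Continuous P) (hQ : Continuous Q)
    (hPQ : ∀ σ i, |P σ i| + dist (Q σ i) 0 ≤ C0 * Real.exp (-lam * |τ i + σ|)) :
    Integrable fun σ : ℝ =>
      h (P σ) (Q σ) I (fun j => φ j + ((σ * w j : ℝ) : AddCircle (1:ℝ))) (t + σ)
      - h 0 0 I (fun j => φ j + ((σ * w j : ℝ) : AddCircle (1:ℝ))) (t + σ) := by
  have hcirc : Continuous fun σ : ℝ => fun j => φ j + ((σ * w j : ℝ) : AddCircle (1:ℝ)) := by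
    refine continuous_pi fun j => continuous_const.add ?_
    exact (AddCircle.continuous_mk' 1).comp (by fun_prop : Continuous fun σ : ℝ => σ * w j)
  have hmaj : Integrable fun σ : ℝ => K * ∑ i, C0 * Real.exp (-lam * |τ i + σ|) := by
    refine Integrable.const_mul (integrable_finsetSum _ fun i _ => Integrable.const_mul ?_ _) _
    exact (integrable_exp_neg_mul_abs hlam).comp_add_left (τ i)
  refine hmaj.mono' ?_ (Filter.Eventually.of_forall fun σ => ?_)
  · refine Continuous.aestronglyMeasurable (Continuous.sub ?_ ?_)
    · exact hcont.comp (hP.prodMk (hQ.prodMk (continuous_const.prodMk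
        (hcirc.prodMk (continuous_const.add continuous_id)))))
    · exact hcont.comp (continuous_const.prodMk (continuous_const.prodMk (continuous_const.prodMk
        (hcirc.prodMk (continuous_const.add continuous_id)))))
  · rw [Real.norm_eq_abs]
    refine (hLip _ _ _ _ _ _ _).trans (mul_le_mul_of_nonneg_left ?_ hK.le)
    rw [← Finset.sum_add_distrib]
    exact Finset.sum_le_sum fun i _ => by simpa using hPQ σ i

/-- The failure of additivity over the pendula does not see any single pendulum `k`: the term of
index `k` is compared with `H p q`, all the others with `H 0 0`. -/
theorem abs_sub_sum_single_le {m : ℕ} {p : Fin m → ℝ} {q : Fin m → AddCircle (1:ℝ)}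
    {H : (Fin m → ℝ) → (Fin m → AddCircle (1:ℝ)) → ℝ} (hK : 0 < K)
    (hH : ∀ p q p' q', |H p q - H p' q'| ≤
      K * ((∑ i, |p i - p' i|) + ∑ i, dist (q i) (q' i))) (e : Fin m → ℝ)
    (he : ∀ i, |p i| + dist (q i) 0 ≤ e i) (k : Fin m) :
    |(H p q - H 0 0) - ∑ i, (H (Pi.single i (p i)) (Pi.single i (q i)) - H 0 0)| ≤
      2 * K * ∑ j ∈ Finset.univ.erase k, e j := by
  rw [← Finset.add_sum_erase _ _ (Finset.mem_univ k)]
  have h₁ : |H p q - H (Pi.single k (p k)) (Pi.single k (q k))| ≤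
      K * ∑ j ∈ Finset.univ.erase k, e j := by
    refine (hH _ _ _ _).trans (mul_le_mul_of_nonneg_left ?_ hK.le)
    rw [← Finset.sum_add_distrib, ← Finset.add_sum_erase _ _ (Finset.mem_univ k)]
    simp only [Pi.single_eq_same, sub_self, abs_zero, dist_self, add_zero, zero_add]
    refine Finset.sum_le_sum fun j hj => ?_
    simpa [Finset.ne_of_mem_erase hj] using he j
  have h₂ : |∑ i ∈ Finset.univ.erase k, (H (Pi.single i (p i)) (Pi.single i (q i)) - H 0 0)| ≤
      K * ∑ j ∈ Finset.univ.erase k, e j := by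
    rw [Finset.mul_sum]
    refine (Finset.abs_sum_le_sum_abs _ _).trans (Finset.sum_le_sum fun j _ => ?_)
    refine (hH _ _ _ _).trans (mul_le_mul_of_nonneg_left ?_ hK.le)
    rw [← Finset.sum_add_distrib, Finset.sum_eq_single j]
    · simpa using he j
    · intro i _ hi; simp [hi]
    · simp
  rw [abs_le] at *
  constructor <;> linarith [h₁.1, h₁.2, h₂.1, h₂.2]

/-- The Melnikov potential splits into the partial ones up to an error exponentially small in the
mutual distance `L` of the times `τ i`. -/
theorem melnikovPotential_sub_sum_le (hn : 1 ≤ n) (hlam : 0 < lam) (hC0 : 0 < C0) (hK : 0 < K)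
    (hp0 : ∀ i, Continuous (p0 i)) (hq0 : ∀ i, Continuous (q0 i))
    (hdecay : ∀ i s, |p0 i s| + dist (q0 i s) 0 ≤ C0 * Real.exp (-lam * |s|))
    (hcont : Continuous fun x : (Fin n → ℝ) × (Fin n → AddCircle (1:ℝ)) × (Fin d → ℝ) ×
        (Fin d → AddCircle (1:ℝ)) × ℝ => h x.1 x.2.1 x.2.2.1 x.2.2.2.1 x.2.2.2.2)
    (hLip : ∀ p q p' q' I φ t, |h p q I φ t - h p' q' I φ t| ≤
      K * ((∑ i, |p i - p' i|) + ∑ i, dist (q i) (q' i)))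
    (ω : (Fin d → ℝ) → Fin d → ℝ)
    (I : Fin d → ℝ) (φ : Fin d → AddCircle (1:ℝ)) (t : ℝ) (L : ℝ) (τ : Fin n → ℝ)
    (hτ : ∀ i j, i ≠ j → L ≤ |τ i - τ j|) :
    |melnikovPotential p0 q0 h ω τ I φ t - ∑ i, partialMelnikov i p0 q0 h ω (τ i) I φ t| ≤
      Real.exp (-(lam / 4) * L) *
        (2 * K * C0 * n * ∫ σ : ℝ, Real.exp (-(lam / 4) * |σ|)) := by
  have hint := integrable_sub_zero_section hlam hcont hLip hK (ω I) τ I φ t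
    (fun σ i => p0 i (τ i + σ)) (fun σ i => q0 i (τ i + σ))
    (continuous_pi fun i => (hp0 i).comp (by fun_prop))
    (continuous_pi fun i => (hq0 i).comp (by fun_prop)) (fun σ i => hdecay i (τ i + σ))
  have hinti := fun i : Fin n => integrable_sub_zero_section hlam hcont hLip hK (ω I) τ I φ t
    (fun σ => Pi.single i (p0 i (τ i + σ))) (fun σ => Pi.single i (q0 i (τ i + σ)))
    ((continuous_single i).comp ((hp0 i).comp (by fun_prop)))
    ((continuous_single i).comp ((hq0 i).comp (by fun_prop))) (fun σ j => by
      by_cases hj : j = i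
      · subst hj; simpa using hdecay j (τ j + σ)
      · simp only [Pi.single_eq_of_ne hj, abs_zero, dist_self, add_zero]; positivity)
  have hmaj : ∀ i, Integrable fun σ : ℝ => Real.exp (-(lam / 4) * |τ i + σ|) := fun i =>
    (integrable_exp_neg_mul_abs (by positivity : 0 < lam / 4)).comp_add_left (τ i)
  unfold melnikovPotential partialMelnikov
  rw [Finset.sum_neg_distrib, ← integral_finsetSum _ (fun i _ => hinti i), neg_sub_neg, abs_sub_comm,
    ← integral_sub hint (integrable_finsetSum _ fun i _ => hinti i), ← Real.norm_eq_abs]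
  refine (norm_integral_le_of_norm_le (g := fun σ => 2 * K * C0 * Real.exp (-(lam / 4) * L) *
    ∑ j, Real.exp (-(lam / 4) * |τ j + σ|))
    ((integrable_finsetSum _ fun i _ => hmaj i).const_mul _)
    (Filter.Eventually.of_forall fun σ => ?_)).trans_eq ?_
  · rw [Real.norm_eq_abs]
    refine abs_le_of_forall_erase_le hlam hn (by positivity) (fun j => τ j + σ) (fun i j hij => ?_) _
      fun k => ?_
    · simpa using hτ i j hij
    · refine (abs_sub_sum_single_le (H := fun p q => h p q I
        (fun j => φ j + ((σ * ω I j : ℝ) : AddCircle (1:ℝ))) (t + σ)) hK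
        (fun p q p' q' => hLip p q p' q' I _ _) _ (fun i => hdecay i (τ i + σ)) k).trans_eq ?_
      rw [← Finset.mul_sum, mul_assoc (2 * K)]
  · rw [integral_const_mul, integral_finsetSum _ fun i _ => hmaj i]
    have : ∀ i, ∫ σ : ℝ, Real.exp (-(lam / 4) * |τ i + σ|) = ∫ σ : ℝ, Real.exp (-(lam / 4) * |σ|) :=
      fun i => integral_add_left_eq_self (fun σ : ℝ => Real.exp (-(lam / 4) * |σ|)) (τ i)
    simp only [this, Finset.sum_const, Finset.card_univ, Fintype.card_fin, nsmul_eq_mul]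
    ring

end

/-- Lemma 3.3, made precise: if for each `i` the descended partial
Melnikov potential is not constant on the closure of the orbit `{(φ − ςω(I), t − ς)}`,
then the Melnikov potential has a critical point with respect to `τ`; in fact there are
infinitely many such critical points. -/
theorem melnikovPotential_has_critical_points
    {n d : ℕ} (hn : 1 ≤ n) (hd : 1 ≤ d)
    (lam C0 K : ℝ) (hlam : 0 < lam) (hC0 : 0 < C0) (hK : 0 < K)
    (p0 : Fin n → ℝ → ℝ) (q0 : Fin n → ℝ → AddCircle (1:ℝ))
    (hp0 : ∀ i, Continuous (p0 i)) (hq0 : ∀ i, Continuous (q0 i))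
    (hdecay : ∀ i s, |p0 i s| + dist (q0 i s) 0 ≤ C0 * Real.exp (-lam * |s|))
    (h : (Fin n → ℝ) → (Fin n → AddCircle (1:ℝ)) → (Fin d → ℝ) →
      (Fin d → AddCircle (1:ℝ)) → ℝ → ℝ)
    (hcont : Continuous fun x : (Fin n → ℝ) × (Fin n → AddCircle (1:ℝ)) × (Fin d → ℝ) ×
        (Fin d → AddCircle (1:ℝ)) × ℝ => h x.1 x.2.1 x.2.2.1 x.2.2.2.1 x.2.2.2.2)
    (hLip : ∀ p q p' q' I φ t, |h p q I φ t - h p' q' I φ t| ≤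
      K * ((∑ i, |p i - p' i|) + ∑ i, dist (q i) (q' i)))
    (htper : ∀ p q I φ t, h p q I φ (t + 1) = h p q I φ t)
    (ω : (Fin d → ℝ) → Fin d → ℝ)
    (I : Fin d → ℝ) (φ : Fin d → AddCircle (1:ℝ)) (t : ℝ)
    (hdiff : Differentiable ℝ (fun τ : Fin n → ℝ => melnikovPotential p0 q0 h ω τ I φ t))
    (hdiffi : ∀ i : Fin n,
      Differentiable ℝ (fun ς => partialMelnikov i p0 q0 h ω ς I φ t))
    -- `F i` is the (continuous) descent of `(θ, u) ↦ 𝓜̃ᵢ(0, I, θ, u)` to `𝕋ᵈ × 𝕋`: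
    (F : Fin n → (Fin d → AddCircle (1:ℝ)) × AddCircle (1:ℝ) → ℝ)
    (hFcont : ∀ i, Continuous (F i))
    (hF : ∀ (i : Fin n) (θ : Fin d → AddCircle (1:ℝ)) (u : ℝ),
      F i (θ, (u : AddCircle (1:ℝ))) = partialMelnikov i p0 q0 h ω 0 I θ u)
    -- no `F i` is constant on the closure of the orbit `{(φ − ςω(I), t − ς) : ς ∈ ℝ}`:
    (hnc : ∀ i : Fin n, ¬ ∃ c : ℝ, ∀ x ∈ closure (Set.range fun ς : ℝ =>
        ((fun j => φ j - ((ς * ω I j : ℝ) : AddCircle (1:ℝ))),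
          ((t - ς : ℝ) : AddCircle (1:ℝ)))), F i x = c) :
    {τ : Fin n → ℝ |
        fderiv ℝ (fun τ' : Fin n → ℝ => melnikovPotential p0 q0 h ω τ' I φ t) τ = 0}.Nonempty ∧
    {τ : Fin n → ℝ |
        fderiv ℝ (fun τ' : Fin n → ℝ => melnikovPotential p0 q0 h ω τ' I φ t) τ = 0}.Infinite := by
  have hshift : ∀ i ς, partialMelnikov i p0 q0 h ω ς I φ t =
      F i ((fun j => φ j - ((ς * ω I j : ℝ) : AddCircle (1:ℝ))),
        ((t - ς : ℝ) : AddCircle (1:ℝ))) := fun i ς => by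
    rw [partialMelnikov_eq_zero_shift, hF]
  have hfar := exists_far_critical_point hn _ hdiff
    (fun i ς => partialMelnikov i p0 q0 h ω ς I φ t) ?_ ?_ ?_
  · have hinf : {τ : Fin n → ℝ | fderiv ℝ
        (fun τ' : Fin n → ℝ => melnikovPotential p0 q0 h ω τ' I φ t) τ = 0}.Infinite := by
      refine Set.Infinite.of_image (fun τ => τ ⟨0, hn⟩)
        (Set.infinite_of_forall_exists_gt fun R => ?_)
      obtain ⟨τ, hτ, hcrit⟩ := hfar (R + 1)
      exact ⟨_, ⟨τ, hcrit, rfl⟩, (lt_add_one R).trans_le (hτ _)⟩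
    exact ⟨hinf.nonempty, hinf⟩
  · intro i x ε R hε
    simp only [hshift]
    exact orbit_recurrent (ω I) φ t (F i) (hFcont i) x ε R hε
  · intro i
    by_contra! hcon
    refine hnc i ⟨partialMelnikov i p0 q0 h ω 0 I φ t, fun x hx => ?_⟩
    refine closure_minimal ?_ (isClosed_eq (hFcont i) continuous_const) hx
    rintro _ ⟨ς, rfl⟩
    exact (hshift i ς).symm.trans (le_antisymm (hcon _ _) (hcon _ _))
  · intro ε hε
    obtain ⟨B, hB⟩ : ∃ B, B = 2 * K * C0 * n * ∫ σ : ℝ, Real.exp (-(lam / 4) * |σ|) := ⟨_, rfl⟩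
    have hlim : Filter.Tendsto (fun L : ℝ => Real.exp (-(lam / 4) * L) * B) Filter.atTop
        (nhds 0) := by
      have h₁ : Filter.Tendsto (fun L : ℝ => -(lam / 4) * L) Filter.atTop Filter.atBot :=
        Filter.tendsto_id.const_mul_atTop_of_neg (by linarith)
      simpa using (Real.tendsto_exp_atBot.comp h₁).mul_const B
    obtain ⟨L, hL⟩ := (hlim.eventually (ge_mem_nhds hε)).exists
    refine ⟨L, fun τ hτ => le_trans ?_ hL⟩
    rw [hB]
    exact melnikovPotential_sub_sum_le hn hlam hC0 hK hp0 hq0 hdecay hcont hLip ω I φ t L τ hτ
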